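/- Let E be a finite set and let f : E → {a,b,c,d} be a uniformly random coloring. For any closed upward families 𝒰, 𝒱, 𝒲 of subsets of E, P(E_{ab}(f) ∈ 𝒰 and E_{ac}(f) ∈ 𝒱 and E_{bc}(f) ∈ 𝒲) ≤ P_{1/2}(𝒰) · P_{1/2}(𝒱) · P_{1/2}(𝒲), where P_{1/2}(𝒜) := |𝒜| / 2^{|E|}. -/

import Mathlib

/-!
Identify the colors with the Klein four-group. A uniform coloring is then a pair of independent
uniform subsets `A = E_{ab}` and `B = E_{ac}`, and `E_{bc} = A ∆ B`. So it is enough to prove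
`𝔼[F(A) G(B) H(A ∆ B)] ≤ 𝔼[F] 𝔼[G] 𝔼[H]` for monotone `F`, `G`, `H`, by induction on the ground set.
When a single element is exposed, eight times the right side minus eight times the left side is
`(F₁ - F₀) (G₁ - G₀) (H₁ - H₀)`, a product of nonnegative increments.
-/

open Finset

/-- `Est f s t` is the set of elements colored `s` or `t` by the coloring `f`.
Colors: `a = 0`, `b = 1`, `c = 2`, `d = 3`. -/
def Est {E : Type*} [Fintype E] [DecidableEq E] (f : E → Fin 4) (s t : Fin 4) : Finset E :=
  Finset.univ.filter (fun e => f e = s ∨ f e = t)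

section SymmDiff

open scoped symmDiff

variable {E : Type*} [DecidableEq E]

theorem insert_symmDiff_of_notMem {a : E} {A B : Finset E} (hB : a ∉ B) :
    insert a A ∆ B = insert a (A ∆ B) := by
  grind [mem_symmDiff]

theorem symmDiff_insert_of_notMem {a : E} {A B : Finset E} (hA : a ∉ A) :
    A ∆ insert a B = insert a (A ∆ B) := by
  rw [symmDiff_comm, insert_symmDiff_of_notMem hA, symmDiff_comm]

theorem insert_symmDiff_insert {a : E} {A B : Finset E} (h : a ∈ A ↔ a ∈ B) :
    insert a A ∆ insert a B = A ∆ B := by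
  grind [mem_symmDiff]

theorem sum_powerset_insert_symmDiff {M : Type*} [AddCommMonoid M] {a : E} {s : Finset E}
    (ha : a ∉ s) (φ : Finset E → Finset E → Finset E → M) :
    ∑ A ∈ (insert a s).powerset, ∑ B ∈ (insert a s).powerset, φ A B (A ∆ B) =
      ∑ A ∈ s.powerset, ∑ B ∈ s.powerset,
        (φ A B (A ∆ B) + φ A (insert a B) (insert a (A ∆ B)) +
          (φ (insert a A) B (insert a (A ∆ B)) + φ (insert a A) (insert a B) (A ∆ B))) := by
  simp only [sum_powerset_insert ha, ← sum_add_distrib]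
  refine sum_congr rfl fun A hA ↦ sum_congr rfl fun B hB ↦ ?_
  have haA : a ∉ A := notMem_mono (mem_powerset.1 hA) ha
  have haB : a ∉ B := notMem_mono (mem_powerset.1 hB) ha
  rw [symmDiff_insert_of_notMem haA, insert_symmDiff_of_notMem haB,
    insert_symmDiff_insert (iff_of_false haA haB)]

section OrderedRing

variable {R : Type*} [CommRing R] [PartialOrder R] [IsOrderedRing R]

theorem two_mul_even_products_le {f₀ f₁ g₀ g₁ h₀ h₁ : R}
    (hf : f₀ ≤ f₁) (hg : g₀ ≤ g₁) (hh : h₀ ≤ h₁) :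
    2 * (f₀ * g₀ * h₀ + f₀ * g₁ * h₁ + (f₁ * g₀ * h₁ + f₁ * g₁ * h₀)) ≤
      (f₀ + f₁) * (g₀ + g₁) * (h₀ + h₁) := by
  have increments_nonneg : 0 ≤ (f₁ - f₀) * (g₁ - g₀) * (h₁ - h₀) :=
    mul_nonneg (mul_nonneg (sub_nonneg.2 hf) (sub_nonneg.2 hg)) (sub_nonneg.2 hh)
  rw [← sub_nonneg]
  convert increments_nonneg using 1
  ring

theorem two_pow_card_mul_sum_mul_symmDiff_le (s : Finset E) {F G H : Finset E → R}
    (hF : Monotone F) (hG : Monotone G) (hH : Monotone H) :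
    2 ^ #s * ∑ A ∈ s.powerset, ∑ B ∈ s.powerset, F A * G B * H (A ∆ B) ≤
      (∑ A ∈ s.powerset, F A) * (∑ A ∈ s.powerset, G A) * ∑ A ∈ s.powerset, H A := by
  induction s using Finset.induction_on generalizing F G H with
  | empty => simp
  | insert a s ha ih =>
    have monotone_insert {K : Finset E → R} (hK : Monotone K) : Monotone fun A ↦ K (insert a A) :=
      fun _ _ h ↦ hK (insert_subset_insert a h)
    have sum_le_sum_insert {K : Finset E → R} (hK : Monotone K) :
        ∑ A ∈ s.powerset, K A ≤ ∑ A ∈ s.powerset, K (insert a A) :=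
      sum_le_sum fun A _ ↦ hK (subset_insert a A)
    have ih₀₀ := ih hF hG hH
    have ih₀₁ := ih hF (monotone_insert hG) (monotone_insert hH)
    have ih₁₀ := ih (monotone_insert hF) hG (monotone_insert hH)
    have ih₁₁ := ih (monotone_insert hF) (monotone_insert hG) hH
    rw [sum_powerset_insert_symmDiff ha fun A B C ↦ F A * G B * H C,
      card_insert_of_notMem ha, pow_succ', mul_assoc]
    simp only [sum_powerset_insert ha, sum_add_distrib]
    refine le_trans (mul_le_mul_of_nonneg_left ?_ zero_le_two) (two_mul_even_products_le
      (sum_le_sum_insert hF) (sum_le_sum_insert hG) (sum_le_sum_insert hH))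
    simp only [mul_add]
    exact add_le_add (add_le_add ih₀₀ ih₀₁) (add_le_add ih₁₀ ih₁₁)

end OrderedRing

theorem monotone_indicator_of_isUpperSet {α M : Type*} [Preorder α] [Zero M] [Preorder M]
    {s : Set α} {f : α → M} (hs : IsUpperSet s) (hf : Monotone f) (hf₀ : 0 ≤ f) :
    Monotone (s.indicator f) := by
  intro a b hab
  by_cases ha : a ∈ s
  · simpa only [Set.indicator_of_mem ha, Set.indicator_of_mem (hs hab ha)] using hf hab
  · simpa only [Set.indicator_of_notMem ha] using Set.indicator_nonneg (fun x _ ↦ hf₀ x) b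

theorem two_pow_card_mul_card_symmDiff_mem_le [Fintype E] {𝒰 𝒱 𝒲 : Finset (Finset E)}
    (hU : IsUpperSet (𝒰 : Set (Finset E))) (hV : IsUpperSet (𝒱 : Set (Finset E)))
    (hW : IsUpperSet (𝒲 : Set (Finset E))) :
    2 ^ Fintype.card E * #{p : Finset E × Finset E | p.1 ∈ 𝒰 ∧ p.2 ∈ 𝒱 ∧ p.1 ∆ p.2 ∈ 𝒲} ≤
      #𝒰 * #𝒱 * #𝒲 := by
  let ind (𝒜 : Finset (Finset E)) : Finset E → ℤ := (𝒜 : Set (Finset E)).indicator 1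
  have monotone_ind {𝒜 : Finset (Finset E)} (h𝒜 : IsUpperSet (𝒜 : Set (Finset E))) :
      Monotone (ind 𝒜) :=
    monotone_indicator_of_isUpperSet h𝒜 monotone_const zero_le_one
  have sum_ind (𝒜 : Finset (Finset E)) : ∑ A, ind 𝒜 A = #𝒜 := by
    simp [ind, Set.indicator_apply]
  have sum_ind_mul : ∑ A, ∑ B, ind 𝒰 A * ind 𝒱 B * ind 𝒲 (A ∆ B) =
      #{p : Finset E × Finset E | p.1 ∈ 𝒰 ∧ p.2 ∈ 𝒱 ∧ p.1 ∆ p.2 ∈ 𝒲} := by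
    simp only [ind, Set.indicator_apply, mem_coe, ite_zero_mul_ite_zero, Pi.one_apply, mul_one,
      and_assoc, ← Fintype.sum_prod_type', natCast_card_filter]
  have := two_pow_card_mul_sum_mul_symmDiff_le univ
    (monotone_ind hU) (monotone_ind hV) (monotone_ind hW)
  rw [powerset_univ, sum_ind_mul, sum_ind, sum_ind, sum_ind, card_univ] at this
  exact_mod_cast this

end SymmDiff

section Coloring

open scoped symmDiff

variable {E : Type*} [Fintype E] [DecidableEq E] {r s t : Fin 4}

theorem mem_Est {f : E → Fin 4} {e : E} : e ∈ Est f s t ↔ f e = s ∨ f e = t := by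
  simp [Est]

theorem Est_symmDiff_Est (f : E → Fin 4) (hrs : r ≠ s) (hrt : r ≠ t) (hst : s ≠ t) :
    Est f r s ∆ Est f r t = Est f s t := by
  ext e
  grind [mem_symmDiff, mem_Est]

theorem Est_prod_Est_bijective (hrs : r ≠ s) (hrt : r ≠ t) (hst : s ≠ t) :
    Function.Bijective fun f : E → Fin 4 ↦ (Est f r s, Est f r t) := by
  refine (Fintype.bijective_iff_injective_and_card _).2 ⟨fun f g hfg ↦ funext fun e ↦ ?_, ?_⟩
  · obtain ⟨hs, ht⟩ := Prod.mk.inj hfg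
    have mem_s : (f e = r ∨ f e = s) ↔ (g e = r ∨ g e = s) := by simp only [← mem_Est, hs]
    have mem_t : (f e = r ∨ f e = t) ↔ (g e = r ∨ g e = t) := by simp only [← mem_Est, ht]
    lia
  · simp [← mul_pow]

theorem card_Est_mem_eq_card_symmDiff_mem (𝒰 𝒱 𝒲 : Finset (Finset E))
    (hrs : r ≠ s) (hrt : r ≠ t) (hst : s ≠ t) :
    #{f : E → Fin 4 | Est f r s ∈ 𝒰 ∧ Est f r t ∈ 𝒱 ∧ Est f s t ∈ 𝒲} =
      #{p : Finset E × Finset E | p.1 ∈ 𝒰 ∧ p.2 ∈ 𝒱 ∧ p.1 ∆ p.2 ∈ 𝒲} :=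
  card_bijective _ (Est_prod_Est_bijective hrs hrt hst) fun f ↦ by
    simp [Est_symmDiff_Est f hrs hrt hst]

end Coloring

/-- For a uniformly random 4-coloring of a finite set `E` and closed upward families
`𝒰, 𝒱, 𝒲`, with `P_{1/2}(𝒜) = |𝒜| / 2^{|E|}`:
`P(E_{ab}(f) ∈ 𝒰 ∧ E_{ac}(f) ∈ 𝒱 ∧ E_{bc}(f) ∈ 𝒲) ≤ P_{1/2}(𝒰) · P_{1/2}(𝒱) · P_{1/2}(𝒲)`. -/
theorem colored_percolation_upward_symmetric_bound (E : Type*) [Fintype E] [DecidableEq E]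
    (𝒰 𝒱 𝒲 : Finset (Finset E))
    (hU : ∀ A ∈ 𝒰, ∀ B : Finset E, A ⊆ B → B ∈ 𝒰)
    (hV : ∀ A ∈ 𝒱, ∀ B : Finset E, A ⊆ B → B ∈ 𝒱)
    (hW : ∀ A ∈ 𝒲, ∀ B : Finset E, A ⊆ B → B ∈ 𝒲) :
    ((Finset.univ.filter (fun f : E → Fin 4 =>
        Est f 0 1 ∈ 𝒰 ∧ Est f 0 2 ∈ 𝒱 ∧ Est f 1 2 ∈ 𝒲)).card : ℚ)
        / 4 ^ Fintype.card E
      ≤ ((𝒰.card : ℚ) / 2 ^ Fintype.card E)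
        * ((𝒱.card : ℚ) / 2 ^ Fintype.card E)
        * ((𝒲.card : ℚ) / 2 ^ Fintype.card E) := by
  have count_le : (2 : ℚ) ^ Fintype.card E * #{f : E → Fin 4 |
      Est f 0 1 ∈ 𝒰 ∧ Est f 0 2 ∈ 𝒱 ∧ Est f 1 2 ∈ 𝒲} ≤ #𝒰 * #𝒱 * #𝒲 := by
    rw [card_Est_mem_eq_card_symmDiff_mem 𝒰 𝒱 𝒲 (by decide) (by decide) (by decide)]
    exact_mod_cast two_pow_card_mul_card_symmDiff_mem_le
      (fun A B hAB hA ↦ hU A hA B hAB) (fun A B hAB hA ↦ hV A hA B hAB)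
      (fun A B hAB hA ↦ hW A hA B hAB)
  have four_pow : (4 : ℚ) ^ Fintype.card E = 2 ^ Fintype.card E * 2 ^ Fintype.card E := by
    rw [← mul_pow]
    norm_num
  rw [div_mul_div_comm, div_mul_div_comm, ← four_pow, mul_comm ((4 : ℚ) ^ _), ← div_div]
  gcongr
  rwa [le_div_iff₀' (by positivity)]
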